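/- Let k ≥ 1, let X and Y_1, …, Y_k be finite-dimensional real inner product spaces, let g_i : Y_i → EReal be lower semicontinuous functions never taking the value −∞, K_i : X → Y_i continuous linear operators with adjoints K_i*, and ω_1, …, ω_k ∈ (0,1] with Σ_{i=1}^k ω_i = 1. Let σ, τ > 0 satisfy στ·Σ_{i=1}^k ‖K_i‖² < 1 and suppose there exist x̂ ∈ X and ŷ_i ∈ Y_i with ŷ_i ∈ ∂g_i(K_i x̂) for every i and Σ_{i=1}^k ω_i K_i* ŷ_i = 0. Let sequences (x^n), (x̄^n) in X and (y_i^n) in Y_i satisfy x̄^0 = x^0 and, for every n ≥ 0: y_i^{n+1} ∈ ∂g_i(σ^{-1}(y_i^n + σ K_i x̄^n − y_i^{n+1})) for each i; x^{n+1} = x^n − τ Σ_{i=1}^k ω_i K_i* y_i^{n+1}; x̄^{n+1} = 2x^{n+1} − x^n. Then there exist x* ∈ X and y_i* ∈ Y_i with y_i* ∈ ∂g_i(K_i x*) for every i and Σ_{i=1}^k ω_i K_i* y_i* = 0, such that x^n → x* and y_i^n → y_i* for every i; in particular x* is a minimizer of x ↦ Σ_{i=1}^k ω_i · g_i(K_i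 x) over X. -/

import Mathlib

/-!
The iteration is a proximal point method in disguise. With `w n = (x n, y (n+1))` and the quadratic
form `pdForm` below, call it `V`, i.e.
`V (x, y) = τ⁻¹ ‖x‖² + ∑ i, ω i (σ⁻¹ ‖y i‖² - 2 ⟪y i, K i x⟫)`,
monotonicity of the subdifferentials yields for every solution `s` of the optimality system
`V (w (n+1) - s) + V (w n - w (n+1)) ≤ V (w n - s)` (`pdForm_step`).
The step-size condition makes `V` coercive (`pdForm_coercive`), so the iterates are bounded and their
successive differences vanish. By lower semicontinuity the graph of each subdifferential is closed
(`Subgrad.of_tendsto`), so every cluster point is a solution; the Fejér inequality with respect to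
that cluster point forces convergence of the whole sequence (`fejer_tendsto`). Minimality of the
limit follows by adding up the subgradient inequalities.
-/

open RealInnerProductSpace Filter

/-- `u` is a subgradient of the extended-real-valued function `f` at `x`:
`f x` is finite and `f z ≥ f x + ⟪u, z - x⟫` for all `z`. -/
def Subgrad {Z : Type*} [NormedAddCommGroup Z] [InnerProductSpace ℝ Z]
    (f : Z → EReal) (x u : Z) : Prop :=
  ∃ r : ℝ, f x = (r : EReal) ∧ ∀ z : Z, ((r + ⟪u, z - x⟫ : ℝ) : EReal) ≤ f z

/-! ### Subdifferentials -/

/-- The subdifferential is a monotone relation. -/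
theorem Subgrad.monotone {Z : Type*} [NormedAddCommGroup Z] [InnerProductSpace ℝ Z]
    {f : Z → EReal} {p q u v : Z} (hp : Subgrad f p u) (hq : Subgrad f q v) :
    0 ≤ ⟪u - v, p - q⟫ := by
  obtain ⟨r, hr, hr'⟩ := hp
  obtain ⟨s, hs, hs'⟩ := hq
  have h1 := hr' q
  have h2 := hs' p
  rw [hs, EReal.coe_le_coe_iff] at h1
  rw [hr, EReal.coe_le_coe_iff] at h2
  have h3 : ⟪u, q - p⟫ = - ⟪u, p - q⟫ := by rw [← neg_sub, inner_neg_right]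
  rw [inner_sub_left]
  linarith

/-- The graph of the subdifferential of a lower semicontinuous function is closed. Finiteness of
`f` at the limit point comes from finiteness at one point `z₀`, where the subgradient inequality
bounds the values `f (p n)`. -/
theorem Subgrad.of_tendsto {Z : Type*} [NormedAddCommGroup Z] [InnerProductSpace ℝ Z]
    {f : Z → EReal} (hf : LowerSemicontinuous f) (hbot : ∀ z, f z ≠ ⊥)
    {z₀ : Z} (hz₀ : f z₀ ≠ ⊤) {p u : ℕ → Z} {p' u' : Z}
    (h : ∀ n, Subgrad f (p n) (u n)) (hp : Tendsto p atTop (nhds p'))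
    (hu : Tendsto u atTop (nhds u')) : Subgrad f p' u' := by
  have key : ∀ (z : Z) (c s : ℝ), (c : EReal) < f p' → f z = s → c + ⟪u', z - p'⟫ ≤ s := by
    intro z c s hc hs
    have hev : ∀ᶠ n in atTop, c + ⟪u n, z - p n⟫ ≤ s := by
      filter_upwards [hp.eventually (hf p' c hc)] with n hn
      obtain ⟨r, hr, hr'⟩ := h n
      have h1 := hr' z
      rw [hs, EReal.coe_le_coe_iff] at h1
      rw [hr, gt_iff_lt, EReal.coe_lt_coe_iff] at hn
      linarith
    have hlim : Tendsto (fun n => c + ⟪u n, z - p n⟫) atTop (nhds (c + ⟪u', z - p'⟫)) :=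
      tendsto_const_nhds.add (hu.inner (tendsto_const_nhds.sub hp))
    exact le_of_tendsto hlim hev
  have htop : f p' ≠ ⊤ := by
    intro htop
    have hs := (EReal.coe_toReal hz₀ (hbot z₀)).symm
    have := key z₀ ((f z₀).toReal - ⟪u', z₀ - p'⟫ + 1) _ (by rw [htop]; exact EReal.coe_lt_top _) hs
    linarith
  have hr := (EReal.coe_toReal htop (hbot p')).symm
  refine ⟨_, hr, fun z => ?_⟩
  by_cases hz : f z = ⊤
  · rw [hz]; exact le_top
  have hs := (EReal.coe_toReal hz (hbot z)).symm
  rw [hs, EReal.coe_le_coe_iff]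
  refine le_of_forall_pos_lt_add fun ε hε => ?_
  have := key z ((f p').toReal - ε / 2) _
    (by rw [hr, EReal.coe_lt_coe_iff, EReal.toReal_coe]; linarith) hs
  linarith

/-! ### Fejér monotone sequences -/

/-- Convergence of Fejér-type sequences: `V` is a coercive continuous gauge of distance, the
sequence decreases it relative to every point of `S`, and cluster points lie in `S`. -/
theorem fejer_tendsto {W : Type*} [NormedAddCommGroup W] [ProperSpace W]
    (V : W → ℝ) (hV : Continuous V) (hV0 : V 0 = 0) {c : ℝ} (hc : 0 < c)
    (hcoer : ∀ w, c * ‖w‖ ^ 2 ≤ V w) (S : Set W) (hS : S.Nonempty) (w : ℕ → W)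
    (hstep : ∀ s ∈ S, ∀ n, V (w (n + 1) - s) + V (w n - w (n + 1)) ≤ V (w n - s))
    (hcl : ∀ (φ : ℕ → ℕ) (a : W), Tendsto (fun n => w (φ n)) atTop (nhds a) →
      Tendsto (fun n => w (φ n + 1)) atTop (nhds a) → a ∈ S) :
    ∃ a ∈ S, Tendsto w atTop (nhds a) := by
  have hpos : ∀ v, 0 ≤ V v := fun v => le_trans (by positivity) (hcoer v)
  have hanti : ∀ s ∈ S, Antitone fun n => V (w n - s) := fun s hs =>
    antitone_nat_of_succ_le fun n => by linarith [hstep s hs n, hpos (w n - w (n + 1))]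
  have hto0 : ∀ v : ℕ → W, Tendsto (fun n => V (v n)) atTop (nhds 0) →
      Tendsto v atTop (nhds 0) := by
    intro v hv
    have h2 : Tendsto (fun n => ‖v n‖ ^ 2) atTop (nhds 0) := by
      refine squeeze_zero (fun n => by positivity) (fun n => ?_)
        (by simpa using hv.const_mul c⁻¹)
      rw [inv_mul_eq_div, le_div_iff₀ hc]
      linarith [hcoer (v n)]
    have h3 := h2.sqrt
    simp only [Real.sqrt_sq (norm_nonneg _), Real.sqrt_zero] at h3
    exact tendsto_zero_iff_norm_tendsto_zero.2 h3
  obtain ⟨s, hs⟩ := hS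
  have hconv := tendsto_atTop_ciInf (hanti s hs) ⟨0, by rintro _ ⟨n, rfl⟩; exact hpos _⟩
  have hdiff : Tendsto (fun n => w n - w (n + 1)) atTop (nhds 0) := by
    apply hto0
    have hd := hconv.sub (hconv.comp (tendsto_add_atTop_nat 1))
    rw [sub_self] at hd
    refine squeeze_zero (fun n => hpos _) (fun n => ?_) hd
    have := hstep s hs n
    simp only [Function.comp]
    linarith
  have hbdd : ∀ n, w n ∈ Metric.closedBall s (√(V (w 0 - s) / c)) := by
    intro n
    rw [mem_closedBall_iff_norm]
    apply Real.le_sqrt_of_sq_le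
    rw [le_div_iff₀ hc]
    linarith [hcoer (w n - s), hanti s hs (Nat.zero_le n)]
  obtain ⟨a, -, φ, hφ, ha⟩ := (isCompact_closedBall s _).tendsto_subseq hbdd
  have ha' : Tendsto (fun n => w (φ n + 1)) atTop (nhds a) := by
    have := ha.sub (hdiff.comp hφ.tendsto_atTop)
    simpa [Function.comp_def] using this
  have haS := hcl φ a ha ha'
  refine ⟨a, haS, ?_⟩
  have hsub : Tendsto (fun n => V (w (φ n) - a)) atTop (nhds 0) := by
    have := (hV.tendsto (a - a)).comp (ha.sub_const a)
    simpa [Function.comp_def, hV0] using this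
  have hlim := tendsto_atTop_ciInf (hanti a haS) ⟨0, by rintro _ ⟨n, rfl⟩; exact hpos _⟩
  have h0 := tendsto_nhds_unique (hlim.comp hφ.tendsto_atTop) hsub
  rw [h0] at hlim
  simpa using (hto0 _ hlim).add_const a

/-! ### The primal-dual metric -/

/-- The quadratic form of the metric in which the primal-dual iteration is a proximal point
method. -/
noncomputable def pdForm {k : ℕ} {X : Type*} [NormedAddCommGroup X] [InnerProductSpace ℝ X]
    {Y : Fin k → Type*} [∀ i, NormedAddCommGroup (Y i)] [∀ i, InnerProductSpace ℝ (Y i)]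
    (K : ∀ i, X →L[ℝ] Y i) (ω : Fin k → ℝ) (σ τ : ℝ) (w : X × ∀ i, Y i) : ℝ :=
  τ⁻¹ * ‖w.1‖ ^ 2 + ∑ i, ω i * (σ⁻¹ * ‖w.2 i‖ ^ 2 - 2 * ⟪w.2 i, K i w.1⟫)

theorem pdForm_coercive {k : ℕ} {X : Type*} [NormedAddCommGroup X] [InnerProductSpace ℝ X]
    {Y : Fin k → Type*} [∀ i, NormedAddCommGroup (Y i)] [∀ i, InnerProductSpace ℝ (Y i)]
    (K : ∀ i, X →L[ℝ] Y i) (ω : Fin k → ℝ) (hω : ∀ i, 0 < ω i ∧ ω i ≤ 1)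
    (σ τ : ℝ) (hσ : 0 < σ) (hτ : 0 < τ) (hστ : σ * τ * ∑ i, ‖K i‖ ^ 2 < 1) :
    ∃ c > 0, ∀ w : X × ∀ i, Y i, c * ‖w‖ ^ 2 ≤ pdForm K ω σ τ w := by
  set L := ∑ i, ‖K i‖ ^ 2 with hL
  have hL0 : 0 ≤ L := Finset.sum_nonneg fun i _ => by positivity
  -- Young's inequality is applied with a parameter `a` slightly larger than `σ`.
  obtain ⟨a, haσ, haL⟩ : ∃ a, σ < a ∧ a * τ * L < 1 := by
    have hcont : Continuous fun a : ℝ => a * τ * L := by fun_prop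
    have h1 : ∀ᶠ a in nhdsWithin σ (Set.Ioi σ), a * τ * L < 1 :=
      (hcont.continuousAt.eventually (gt_mem_nhds hστ)).filter_mono nhdsWithin_le_nhds
    obtain ⟨a, ha1, ha2⟩ := (h1.and self_mem_nhdsWithin).exists
    exact ⟨a, ha2, ha1⟩
  have ha : 0 < a := hσ.trans haσ
  set A := τ⁻¹ - a * L with hA
  set B := σ⁻¹ - a⁻¹ with hB
  have hA0 : 0 < A := by
    rw [hA, sub_pos, inv_eq_one_div, lt_div_iff₀ hτ]
    linarith
  have hB0 : 0 < B := sub_pos.2 ((inv_lt_inv₀ ha hσ).2 haσ)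
  have hlow : ∀ w : X × ∀ i, Y i, A * ‖w.1‖ ^ 2 + ∑ i, ω i * (B * ‖w.2 i‖ ^ 2)
      ≤ pdForm K ω σ τ w := by
    intro w
    have hi : ∀ i, ω i * (B * ‖w.2 i‖ ^ 2) - a * ‖K i‖ ^ 2 * ‖w.1‖ ^ 2
        ≤ ω i * (σ⁻¹ * ‖w.2 i‖ ^ 2 - 2 * ⟪w.2 i, K i w.1⟫) := by
      intro i
      have h1 : ⟪w.2 i, K i w.1⟫ ≤ ‖w.2 i‖ * (‖K i‖ * ‖w.1‖) :=
        (real_inner_le_norm _ _).trans (by gcongr; exact (K i).le_opNorm _)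
      set q := ‖K i‖ * ‖w.1‖ with hq
      have h2 : 2 * (‖w.2 i‖ * q) ≤ a⁻¹ * ‖w.2 i‖ ^ 2 + a * q ^ 2 := by
        have h3 : 0 ≤ a⁻¹ * (‖w.2 i‖ - a * q) ^ 2 := by positivity
        have h4 : a⁻¹ * (‖w.2 i‖ - a * q) ^ 2
            = a⁻¹ * ‖w.2 i‖ ^ 2 - 2 * (‖w.2 i‖ * q) + a * q ^ 2 := by
          field_simp
          ring
        linarith
      have h5 : ω i * (a * q ^ 2) ≤ a * q ^ 2 :=
        mul_le_of_le_one_left (by positivity) (hω i).2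
      have h6 : ω i * (2 * ⟪w.2 i, K i w.1⟫) ≤ ω i * (a⁻¹ * ‖w.2 i‖ ^ 2 + a * q ^ 2) :=
        mul_le_mul_of_nonneg_left (by linarith) (hω i).1.le
      have h7 : a * ‖K i‖ ^ 2 * ‖w.1‖ ^ 2 = a * q ^ 2 := by rw [hq]; ring
      rw [h7, hB]
      linarith
    have hsum := Finset.sum_le_sum fun i (_ : i ∈ Finset.univ) => hi i
    rw [Finset.sum_sub_distrib, ← Finset.sum_mul, ← Finset.mul_sum, ← hL] at hsum
    rw [pdForm, hA]
    linarith
  -- The product carries the sup norm, so a common lower bound for `A` and all `ω i * B` suffices.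
  obtain ⟨c, hc0, hcA, hcB⟩ : ∃ c > 0, c ≤ A ∧ ∀ i, c ≤ ω i * B := by
    rcases isEmpty_or_nonempty (Fin k) with he | he
    · exact ⟨A, hA0, le_rfl, fun i => he.elim i⟩
    · obtain ⟨j, hj⟩ := Finite.exists_min fun i => ω i * B
      exact ⟨min A (ω j * B), lt_min hA0 (mul_pos (hω j).1 hB0), min_le_left _ _,
        fun i => (min_le_right _ _).trans (hj i)⟩
  refine ⟨c, hc0, fun w => le_trans ?_ (hlow w)⟩
  have hnn : ∀ i, 0 ≤ ω i * (B * ‖w.2 i‖ ^ 2) := fun i =>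
    mul_nonneg (hω i).1.le (by positivity)
  have hnorm : ‖w‖ ≤ √((A * ‖w.1‖ ^ 2 + ∑ i, ω i * (B * ‖w.2 i‖ ^ 2)) / c) := by
    rw [Prod.norm_def, max_le_iff]
    constructor
    · apply Real.le_sqrt_of_sq_le
      rw [le_div_iff₀ hc0]
      have := mul_le_mul_of_nonneg_right hcA (sq_nonneg ‖w.1‖)
      linarith [Finset.sum_nonneg fun i (_ : i ∈ Finset.univ) => hnn i]
    · rw [pi_norm_le_iff_of_nonneg (Real.sqrt_nonneg _)]
      intro i
      apply Real.le_sqrt_of_sq_le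
      rw [le_div_iff₀ hc0]
      have h1 := mul_le_mul_of_nonneg_right (hcB i) (sq_nonneg ‖w.2 i‖)
      have h2 := Finset.single_le_sum (fun i _ => hnn i) (Finset.mem_univ i)
      have h3 : 0 ≤ A * ‖w.1‖ ^ 2 := by positivity
      linarith
  have hE : 0 ≤ (A * ‖w.1‖ ^ 2 + ∑ i, ω i * (B * ‖w.2 i‖ ^ 2)) / c :=
    div_nonneg (add_nonneg (by positivity) (Finset.sum_nonneg fun i _ => hnn i)) hc0.le
  have h := (Real.le_sqrt (norm_nonneg _) hE).1 hnorm
  rw [le_div_iff₀ hc0] at h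
  linarith

/-- Fejér inequality for one step of the iteration, from `(x, y)` to `(x', y')`, relative to a
solution `(xh, yh)`; the hypothesis `hmono` is monotonicity of the subdifferentials. -/
theorem pdForm_step {k : ℕ} {X : Type*} [NormedAddCommGroup X] [InnerProductSpace ℝ X]
    {Y : Fin k → Type*} [∀ i, NormedAddCommGroup (Y i)] [∀ i, InnerProductSpace ℝ (Y i)]
    (K : ∀ i, X →L[ℝ] Y i) (Kadj : ∀ i, Y i →L[ℝ] X)
    (hadj : ∀ i, ∀ (x : X) (y : Y i), ⟪Kadj i y, x⟫ = ⟪y, K i x⟫)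
    (ω : Fin k → ℝ) (hω : ∀ i, 0 < ω i) (σ τ : ℝ) (hσ : 0 < σ) (hτ : 0 < τ)
    (x x' xh : X) (y y' yh : ∀ i, Y i) (hyh : ∑ i, ω i • Kadj i (yh i) = 0)
    (hx : x' = x - τ • ∑ i, ω i • Kadj i (y i))
    (hmono : ∀ i, 0 ≤ ⟪y' i - yh i,
      σ⁻¹ • (y i + σ • K i ((2 : ℝ) • x' - x) - y' i) - K i xh⟫) :
    pdForm K ω σ τ ((x', y') - (xh, yh)) + pdForm K ω σ τ ((x, y) - (x', y'))
      ≤ pdForm K ω σ τ ((x, y) - (xh, yh)) := by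
  have hadjsum : ∀ (v : ∀ i, Y i) (z : X),
      ⟪∑ i, ω i • Kadj i (v i), z⟫ = ∑ i, ω i * ⟪v i, K i z⟫ := by
    intro v z
    rw [sum_inner]
    exact Finset.sum_congr rfl fun i _ => by rw [real_inner_smul_left, hadj]
  -- The primal update, tested against `x' - xh`.
  have hprimal : τ⁻¹ * ⟪x - x', x' - xh⟫ = ∑ i, ω i * ⟪y i - yh i, K i (x' - xh)⟫ := by
    have h1 : x - x' = τ • ∑ i, ω i • Kadj i (y i) := by rw [hx]; abel
    have h2 := hadjsum yh (x' - xh)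
    rw [hyh, inner_zero_left] at h2
    rw [h1, real_inner_smul_left, inv_mul_cancel_left₀ hτ.ne', hadjsum]
    simp only [inner_sub_left, mul_sub, Finset.sum_sub_distrib]
    linarith
  have hx3 : ‖x - xh‖ ^ 2 = ‖x' - xh‖ ^ 2 + ‖x - x'‖ ^ 2 + 2 * ⟪x - x', x' - xh⟫ := by
    rw [← sub_add_sub_cancel x x' xh, norm_add_sq_real]; ring
  have hi : ∀ i, ω i * (σ⁻¹ * ‖y' i - yh i‖ ^ 2 - 2 * ⟪y' i - yh i, K i (x' - xh)⟫)
      + ω i * (σ⁻¹ * ‖y i - y' i‖ ^ 2 - 2 * ⟪y i - y' i, K i (x - x')⟫)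
      ≤ ω i * (σ⁻¹ * ‖y i - yh i‖ ^ 2 - 2 * ⟪y i - yh i, K i (x - xh)⟫)
        + 2 * (ω i * ⟪y i - yh i, K i (x' - xh)⟫) := by
    intro i
    have hy3 : ‖y i - yh i‖ ^ 2
        = ‖y' i - yh i‖ ^ 2 + ‖y i - y' i‖ ^ 2 + 2 * ⟪y' i - yh i, y i - y' i⟫ := by
      rw [← sub_add_sub_cancel (y i) (y' i) (yh i), norm_add_sq_real, real_inner_comm]; ring
    have hm := hmono i
    have hvec : σ⁻¹ • (y i + σ • K i ((2 : ℝ) • x' - x) - y' i) - K i xh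
        = σ⁻¹ • (y i - y' i) + (K i (x' - xh) - K i (x - x')) := by
      have : y i + σ • K i ((2 : ℝ) • x' - x) - y' i
          = (y i - y' i) + σ • K i ((2 : ℝ) • x' - x) := by abel
      rw [this, smul_add, inv_smul_smul₀ hσ.ne']
      simp only [map_sub, map_add, two_smul]
      abel
    rw [hvec, inner_add_right, real_inner_smul_right,
      inner_sub_right _ (K i (x' - xh))] at hm
    have e1 : K i (x - xh) = K i (x - x') + K i (x' - xh) := by
      rw [← map_add, sub_add_sub_cancel]
    have e2 : y i - yh i = (y i - y' i) + (y' i - yh i) := by abel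
    have e3 : ⟪y i - yh i, K i (x - xh)⟫ = ⟪y i - y' i, K i (x - x')⟫
        + ⟪y' i - yh i, K i (x - x')⟫ + ⟪y i - yh i, K i (x' - xh)⟫ := by
      rw [e1, inner_add_right]
      conv_lhs => arg 1; rw [e2, inner_add_left]
    have := mul_nonneg (hω i).le hm
    rw [hy3, e3]
    linarith
  have hsum := Finset.sum_le_sum fun i (_ : i ∈ Finset.univ) => hi i
  simp only [Finset.sum_add_distrib, ← Finset.mul_sum] at hsum
  simp only [pdForm, Prod.fst_sub, Prod.snd_sub, Pi.sub_apply]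
  rw [hx3]
  linarith

/-! ### Convergence of the iteration -/

theorem ereal_coe_sum {ι : Type*} (s : Finset ι) (f : ι → ℝ) :
    ((∑ i ∈ s, f i : ℝ) : EReal) = ∑ i ∈ s, (f i : EReal) :=
  map_sum (⟨⟨Real.toEReal, EReal.coe_zero⟩, EReal.coe_add⟩ : ℝ →+ EReal) f s

theorem stmt_13
    {k : ℕ} (hk : 1 ≤ k)
    {X : Type*} [NormedAddCommGroup X] [InnerProductSpace ℝ X] [FiniteDimensional ℝ X]
    {Y : Fin k → Type*} [∀ i, NormedAddCommGroup (Y i)] [∀ i, InnerProductSpace ℝ (Y i)]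
    [∀ i, FiniteDimensional ℝ (Y i)]
    (g : ∀ i, Y i → EReal)
    (hg_lsc : ∀ i, LowerSemicontinuous (g i)) (hg_bot : ∀ i, ∀ z, g i z ≠ ⊥)
    (K : ∀ i, X →L[ℝ] Y i) (Kadj : ∀ i, Y i →L[ℝ] X)
    (hadj : ∀ i, ∀ (x : X) (y : Y i), ⟪Kadj i y, x⟫ = ⟪y, K i x⟫)
    (ω : Fin k → ℝ) (hω : ∀ i, 0 < ω i ∧ ω i ≤ 1) (hωsum : ∑ i, ω i = 1)
    (σ τ : ℝ) (hσ : 0 < σ) (hτ : 0 < τ)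
    (hστ : σ * τ * ∑ i, ‖K i‖^2 < 1)
    (hopt : ∃ (xh : X) (yh : ∀ i, Y i),
      (∀ i, Subgrad (g i) (K i xh) (yh i)) ∧ ∑ i, ω i • Kadj i (yh i) = 0)
    (x xb : ℕ → X) (y : ℕ → ∀ i, Y i)
    (hxb0 : xb 0 = x 0)
    (hy : ∀ (n : ℕ) (i : Fin k),
      Subgrad (g i) (σ⁻¹ • (y n i + σ • K i (xb n) - y (n+1) i)) (y (n+1) i))
    (hx : ∀ n : ℕ, x (n+1) = x n - τ • ∑ i, ω i • Kadj i (y (n+1) i))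
    (hxbn : ∀ n : ℕ, xb (n+1) = (2:ℝ) • x (n+1) - x n) :
    ∃ (xs : X) (ys : ∀ i, Y i),
      (∀ i, Subgrad (g i) (K i xs) (ys i)) ∧ ∑ i, ω i • Kadj i (ys i) = 0 ∧
      Tendsto x atTop (nhds xs) ∧
      (∀ i, Tendsto (fun n => y n i) atTop (nhds (ys i))) ∧
      ∀ z : X, ∑ i, ((ω i : ℝ) : EReal) * g i (K i xs)
        ≤ ∑ i, ((ω i : ℝ) : EReal) * g i (K i z) := by
  obtain ⟨xh, yh, hsub, hzero⟩ := hopt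
  obtain ⟨c, hc, hcoer⟩ := pdForm_coercive K ω hω σ τ hσ hτ hστ
  let S : Set (X × ∀ i, Y i) :=
    {s | (∀ i, Subgrad (g i) (K i s.1) (s.2 i)) ∧ ∑ i, ω i • Kadj i (s.2 i) = 0}
  have hV : Continuous (pdForm K ω σ τ) := by
    unfold pdForm
    fun_prop
  obtain ⟨⟨xs, ys⟩, ⟨hs1, hs2⟩, hlim⟩ := fejer_tendsto (pdForm K ω σ τ) hV (by simp [pdForm]) hc
    hcoer S ⟨(xh, yh), hsub, hzero⟩ (fun n => (x n, y (n + 1)))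
    (by
      rintro ⟨a, b⟩ ⟨ha, hb⟩ n
      refine pdForm_step K Kadj hadj ω (fun i => (hω i).1) σ τ hσ hτ _ _ _ _ _ _ hb (hx n)
        fun i => ?_
      have := (hy (n + 1) i).monotone (ha i)
      rwa [hxbn] at this)
    (by
      rintro φ ⟨a, b⟩ h1 h2
      have hx1 : Tendsto (fun n => x (φ n)) atTop (nhds a) := h1.fst_nhds
      have hx2 : Tendsto (fun n => x (φ n + 1)) atTop (nhds a) := h2.fst_nhds
      have hy1 : ∀ i, Tendsto (fun n => y (φ n + 1) i) atTop (nhds (b i)) :=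
        tendsto_pi_nhds.1 h1.snd_nhds
      have hy2 : ∀ i, Tendsto (fun n => y (φ n + 1 + 1) i) atTop (nhds (b i)) :=
        tendsto_pi_nhds.1 h2.snd_nhds
      refine ⟨fun i => ?_, ?_⟩
      · obtain ⟨r, hr, -⟩ := hsub i
        refine Subgrad.of_tendsto (hg_lsc i) (hg_bot i) (z₀ := K i xh)
          (by rw [hr]; exact EReal.coe_ne_top r) (fun n => hy (φ n + 1) i) ?_ (hy2 i)
        have hxb : Tendsto (fun n => xb (φ n + 1)) atTop (nhds a) := by
          simp only [hxbn]
          have := (hx2.const_smul (2 : ℝ)).sub hx1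
          rwa [two_smul, add_sub_cancel_right] at this
        have hK := ((K i).continuous.tendsto a).comp hxb
        have := (((hy1 i).add (hK.const_smul σ)).sub (hy2 i)).const_smul σ⁻¹
        rwa [add_sub_cancel_left, inv_smul_smul₀ hσ.ne'] at this
      · have hA : Tendsto (fun n => ∑ i, ω i • Kadj i (y (φ n + 1) i)) atTop
            (nhds (∑ i, ω i • Kadj i (b i))) :=
          tendsto_finsetSum _ fun i _ =>
            (((Kadj i).continuous.tendsto _).comp (hy1 i)).const_smul (ω i)
        have hB : Tendsto (fun n => ∑ i, ω i • Kadj i (y (φ n + 1) i)) atTop (nhds 0) := by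
          have := (hx1.sub hx2).const_smul τ⁻¹
          rw [sub_self, smul_zero] at this
          refine this.congr fun n => ?_
          rw [hx (φ n), sub_sub_cancel, inv_smul_smul₀ hτ.ne']
        exact tendsto_nhds_unique hA hB)
  refine ⟨xs, ys, hs1, hs2, hlim.fst_nhds, fun i => ?_, fun z => ?_⟩
  · exact (tendsto_add_atTop_iff_nat 1).1 (tendsto_pi_nhds.1 hlim.snd_nhds i)
  · choose r hr hr' using hs1
    have hcross : ∑ i, ω i * ⟪ys i, K i z - K i xs⟫ = 0 := by
      have h0 : ⟪∑ i, ω i • Kadj i (ys i), z - xs⟫ = 0 := by rw [hs2, inner_zero_left]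
      rw [sum_inner] at h0
      rw [← h0]
      exact Finset.sum_congr rfl fun i _ => by rw [real_inner_smul_left, hadj, map_sub]
    have hleft : ∑ i, ((ω i : ℝ) : EReal) * g i (K i xs)
        = ∑ i, ((ω i : ℝ) : EReal) * ((r i + ⟪ys i, K i z - K i xs⟫ : ℝ) : EReal) := by
      have : ∑ i, ω i * r i = ∑ i, ω i * (r i + ⟪ys i, K i z - K i xs⟫) := by
        simp only [mul_add, Finset.sum_add_distrib]
        linarith
      have h := congrArg (Real.toEReal) this
      simp only [ereal_coe_sum, EReal.coe_mul] at h
      simpa only [hr] using h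
    rw [hleft]
    exact Finset.sum_le_sum fun i _ =>
      mul_le_mul_of_nonneg_left (hr' i (K i z)) (EReal.coe_nonneg.2 (hω i).1.le)
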